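/- Let x be a real number and let a be a complex number such that a+3/2 and a+2 are not nonpositive integers or zero. Then Σ_{k=0}^∞ (x/4)^{2k} H_{2k+1}(x/2) / ((a+3/2)_k k!) = x · e^{x²/4} · Σ_{k=0}^∞ (a/2+1)_k (a/2+3/2)_k (−x²)^k / ((a+3/2)_k (a+2)_k k!). -/

import Mathlib

/-- The Pochhammer symbol `(a)_k = a (a+1) ⋯ (a+k-1)`. -/
noncomputable def poch (a : ℂ) (k : ℕ) : ℂ := Polynomial.eval a (ascPochhammer ℂ k)

/-- The physicists' Hermite polynomial `H_n(t) = (-1)^n e^{t²} (d/dt)^n e^{-t²}`. -/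
noncomputable def physHermite (n : ℕ) (t : ℝ) : ℝ :=
  (-1 : ℝ) ^ n * Real.exp (t ^ 2) * iteratedDeriv n (fun s => Real.exp (-(s ^ 2))) t

section Aux
open Finset

lemma poch_zero' (a : ℂ) : poch a 0 = 1 := by simp [poch]

lemma poch_succ' (a : ℂ) (k : ℕ) : poch a (k + 1) = poch a k * (a + k) := by
  simp [poch, ascPochhammer_succ_eval]

lemma poch_ne {c : ℂ} (hc : ∀ n : ℕ, c + n ≠ 0) (k : ℕ) : poch c k ≠ 0 := by
  induction k with
  | zero => simp [poch_zero']
  | succ k ih => rw [poch_succ']; exact mul_ne_zero ih (hc k)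

lemma sum_pairs {M : Type*} [AddCommMonoid M] (f : ℕ → M) (N : ℕ) :
    ∑ i ∈ range (2 * N), f i = ∑ m ∈ range N, (f (2 * m) + f (2 * m + 1)) := by
  induction N with
  | zero => simp
  | succ N ih =>
    rw [show 2 * (N + 1) = 2 * N + 1 + 1 by ring, sum_range_succ, sum_range_succ, ih,
      sum_range_succ, add_assoc]

lemma fact_odd (j : ℕ) : ((2 * j).factorial : ℝ) =
    ((2 * j - 1).doubleFactorial : ℝ) * 2 ^ j * (j.factorial : ℝ) := by
  cases j with
  | zero => simp
  | succ j =>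
    have h := Nat.factorial_eq_mul_doubleFactorial (2 * j + 1)
    rw [show 2 * j + 1 + 1 = 2 * (j + 1) by ring, Nat.doubleFactorial_two_mul] at h
    rw [show 2 * (j + 1) - 1 = 2 * j + 1 by omega, h]
    push_cast
    ring

lemma physHermite_eq (n : ℕ) (t : ℝ) :
    physHermite n t = √2 ^ n * Polynomial.aeval (√2 * t) (Polynomial.hermite n) := by
  have hs : (√2) ^ 2 = 2 := Real.sq_sqrt (by norm_num)
  have h1 : (fun s : ℝ => Real.exp (-(s ^ 2))) =
      fun s => (fun y : ℝ => Real.exp (-(y ^ 2 / 2))) (√2 * s) := by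
    funext s
    simp only [mul_pow, hs]
    congr 1; ring
  have hcd : ContDiff ℝ (n : ℕ∞) (fun y : ℝ => Real.exp (-(y ^ 2 / 2))) := by fun_prop
  rw [physHermite, h1, iteratedDeriv_comp_const_mul hcd, iteratedDeriv_eq_iterate]
  rw [Polynomial.hermite_eq_deriv_gaussian']
  have : (√2 * t) ^ 2 / 2 = t ^ 2 := by rw [mul_pow, hs]; ring
  rw [this]
  ring

lemma hermite_odd_explicit (k : ℕ) (t : ℝ) :
    physHermite (2 * k + 1) t = ∑ p ∈ antidiagonal k,
      (-1) ^ p.2 * ((2 * k + 1).factorial : ℝ) / ((p.2.factorial : ℝ) * ((2 * p.1 + 1).factorial : ℝ))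
        * (2 * t) ^ (2 * p.1 + 1) := by
  have hs : (√2) ^ 2 = 2 := Real.sq_sqrt (by norm_num)
  rw [physHermite_eq, Polynomial.aeval_eq_sum_range, Polynomial.natDegree_hermite,
    show 2 * k + 1 + 1 = 2 * (k + 1) by ring, sum_pairs,
    Nat.sum_antidiagonal_eq_sum_range_succ_mk, mul_sum]
  refine sum_congr rfl fun m hm => ?_
  obtain ⟨j, rfl⟩ : ∃ j, k = m + j := ⟨k - m, by have := mem_range.1 hm; omega⟩
  rw [Polynomial.coeff_hermite_of_odd_add ⟨(m + j) + m, by ring⟩]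
  have h2 := Polynomial.coeff_hermite_explicit j (2 * m + 1)
  rw [show 2 * j + (2 * m + 1) = 2 * (m + j) + 1 by ring] at h2
  rw [h2]
  have hch : (((2 * (m + j) + 1).choose (2 * m + 1) : ℕ) : ℝ) =
      ((2 * (m + j) + 1).factorial : ℝ) / (((2 * m + 1).factorial : ℝ) * ((2 * j).factorial : ℝ)) := by
    rw [Nat.cast_choose ℝ (by omega)]
    congr 4
    omega
  simp only [zero_smul, zero_add, zsmul_eq_mul, Nat.add_sub_cancel_left]
  push_cast
  rw [hch, fact_odd j]
  have hd : ((2 * j - 1).doubleFactorial : ℝ) ≠ 0 := by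
    exact_mod_cast (Nat.doubleFactorial_pos _).ne'
  have h3 : √2 ^ (2 * (m + j) + 1) * (√2 * t) ^ (2 * m + 1) = 2 ^ j * (2 * t) ^ (2 * m + 1) := by
    rw [mul_pow, mul_pow, ← mul_assoc, ← pow_add,
      show 2 * (m + j) + 1 + (2 * m + 1) = 2 * (m + m + j + 1) by ring, pow_mul, hs]
    ring
  have h4 := Nat.factorial_ne_zero j
  have h5 := Nat.factorial_ne_zero (2 * m + 1)
  rw [mul_left_comm, h3]
  field_simp

/-- moments -/
noncomputable def qseq (c : ℂ) (i : ℕ) : ℂ :=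
  if Even i then poch (1 / 2) (i / 2) / poch c (i / 2) else 0

lemma qseq_even (c : ℂ) (k : ℕ) : qseq c (2 * k) = poch (1 / 2) k / poch c k := by
  simp [qseq]

lemma qseq_odd (c : ℂ) (k : ℕ) : qseq c (2 * k + 1) = 0 := by
  simp [qseq]

/-- moment functional -/
noncomputable def Efun (c : ℂ) : Polynomial ℂ →ₗ[ℂ] ℂ :=
  Polynomial.lsum fun i => (LinearMap.id : ℂ →ₗ[ℂ] ℂ).smulRight (qseq c i)

lemma Efun_monomial (c : ℂ) (i : ℕ) (b : ℂ) :
    Efun c (Polynomial.monomial i b) = b * qseq c i := by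
  simp [Efun, Polynomial.lsum_apply, Polynomial.sum_monomial_index]

lemma Efun_X_pow (c : ℂ) (i : ℕ) : Efun c (Polynomial.X ^ i) = qseq c i := by
  rw [Polynomial.X_pow_eq_monomial, Efun_monomial, one_mul]

lemma Efun_C_mul (c b : ℂ) (p : Polynomial ℂ) : Efun c (Polynomial.C b * p) = b * Efun c p := by
  rw [← Polynomial.smul_eq_C_mul, map_smul, smul_eq_mul]

lemma qseq_rec {c : ℂ} (hc : ∀ n : ℕ, c + n ≠ 0) (i : ℕ) :
    ((i : ℂ) + 1) * qseq c i = (i + 2 * c) * qseq c (i + 2) := by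
  rcases Nat.even_or_odd' i with ⟨k, rfl | rfl⟩
  · rw [show 2 * k + 2 = 2 * (k + 1) by ring, qseq_even, qseq_even, poch_succ', poch_succ']
    have := hc k
    have := poch_ne hc k
    push_cast
    field_simp
    ring
  · rw [show 2 * k + 1 + 2 = 2 * (k + 1) + 1 by ring, qseq_odd, qseq_odd]; simp

open Polynomial in
lemma Efun_parts {c : ℂ} (hc : ∀ n : ℕ, c + n ≠ 0) (p : ℂ[X]) :
    Efun c ((1 - X ^ 2) * derivative p - C (2 * c - 1) * X * p) = 0 := by
  induction p using Polynomial.induction_on' with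
  | add p q hp hq =>
    rw [← add_zero (0 : ℂ)]
    nth_rewrite 2 [← hp]
    rw [← hq, ← map_add, derivative_add]
    congr 1; ring
  | monomial i b =>
    cases i with
    | zero =>
      rw [show ((1 - X ^ 2) * derivative (monomial 0 b) - C (2 * c - 1) * X * monomial 0 b : ℂ[X])
        = C (-(2 * c - 1) * b) * X ^ 1 by simp [← C_mul_X_pow_eq_monomial]; ring]
      rw [Efun_C_mul, Efun_X_pow, show qseq c 1 = 0 from qseq_odd c 0, mul_zero]
    | succ i =>
      have h := qseq_rec hc i
      rw [show ((1 - X ^ 2) * derivative (monomial (i + 1) b) - C (2 * c - 1) * X * monomial (i + 1) b : ℂ[X])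
        = C ((i + 1) * b) * X ^ i - C ((i + 2 * c) * b) * X ^ (i + 2) by
          rw [← C_mul_X_pow_eq_monomial]; simp; ring]
      rw [map_sub, Efun_C_mul, Efun_C_mul, Efun_X_pow, Efun_X_pow]
      linear_combination b * h

open Polynomial in
lemma Efun_one_add_rec {c : ℂ} (hc : ∀ n : ℕ, c + n ≠ 0) (N : ℕ) :
    (2 * N + 2 * c - 1) * Efun c ((1 + X) ^ N) = (N + 2 * c - 1) * Efun c ((1 + X) ^ (N + 1)) := by
  have h := Efun_parts hc ((1 + X) ^ N)
  have : ((1 - X ^ 2) * derivative ((1 + X) ^ N) - C (2 * c - 1) * X * (1 + X) ^ N : ℂ[X]) =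
      C (2 * N + 2 * c - 1) * (1 + X) ^ N - C (N + 2 * c - 1) * (1 + X) ^ (N + 1) := by
    cases N with
    | zero => simp; ring
    | succ N =>
      have h2 : (C 2 : ℂ[X]) = 2 := map_ofNat C 2
      simp [derivative_pow, h2]; ring
  rw [this, map_sub, Efun_C_mul, Efun_C_mul] at h
  linear_combination h

open Polynomial in
lemma Efun_odd {a : ℂ} (h3 : ∀ n : ℕ, a + 3 / 2 + n ≠ 0) (h2 : ∀ n : ℕ, a + 2 + n ≠ 0) (j : ℕ) :
    Efun (a + 3 / 2) ((1 + X) ^ (2 * j + 1)) =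
      4 ^ j * (poch (a / 2 + 1) j * poch (a / 2 + 3 / 2) j / (poch (a + 3 / 2) j * poch (a + 2) j)) := by
  induction j with
  | zero =>
    have e0 := qseq_even (a + 3 / 2) 0
    have e1 := qseq_odd (a + 3 / 2) 0
    have := Efun_X_pow (a + 3 / 2) 0
    have h1 := Efun_X_pow (a + 3 / 2) 1
    simp only [mul_zero, zero_add, poch_zero', pow_zero, pow_one] at *
    rw [map_add, this, h1, e0, e1]; simp
  | succ j ih =>
    have r1 := Efun_one_add_rec h3 (2 * j + 1)
    have r2 := Efun_one_add_rec h3 (2 * j + 1 + 1)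
    rw [ih] at r1
    rw [show 2 * (j + 1) + 1 = 2 * j + 1 + 1 + 1 by ring]
    simp only [poch_succ']
    push_cast at r1 r2
    have n3 := h3 j
    have n2 := h2 j
    have p3 := poch_ne h3 j
    have p2 := poch_ne h2 j
    generalize poch (a + 3 / 2) j = P3 at *
    generalize poch (a + 2) j = P2 at *
    generalize Efun (a + 3 / 2) ((1 + X) ^ (2 * j + 1 + 1)) = E1 at *
    generalize Efun (a + 3 / 2) ((1 + X) ^ (2 * j + 1 + 1 + 1)) = E2 at *
    generalize poch (a / 2 + 1) j = Q1 at *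
    generalize poch (a / 2 + 3 / 2) j = Q2 at *
    have key : (a + 3 / 2 + j) * (a + 2 + j) * E2 = 4 * ((a / 2 + 1 + j) * (a / 2 + 3 / 2 + j)) *
        (4 ^ j * (Q1 * Q2 / (P3 * P2))) := by
      linear_combination (-(a + 3 / 2 + j) / 2) * r2 - (a / 2 + 3 / 2 + j) * r1
    rw [← mul_right_inj' (mul_ne_zero n3 n2), key, pow_succ]
    generalize a + 3 / 2 + (j : ℂ) = N3 at *
    generalize a + 2 + (j : ℂ) = N2 at *
    field_simp

lemma poch_bound (b : ℂ) {c : ℂ} (hc : ∀ n : ℕ, c + n ≠ 0) :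
    ∃ D : ℝ, 0 ≤ D ∧ ∀ k : ℕ, ‖poch b k / poch c k‖ ≤ D ^ k := by
  have ht : Filter.Tendsto (fun k : ℕ => ‖(c + k)⁻¹‖) Filter.atTop (nhds 0) := by
    have h1 : Filter.Tendsto (fun k : ℕ => c + (k : ℂ)) Filter.atTop (Bornology.cobounded ℂ) := by
      rw [← tendsto_norm_atTop_iff_cobounded]
      refine Filter.tendsto_atTop_mono (f := fun k : ℕ => (k : ℝ) + -‖c‖) (fun k => ?_)
        (Filter.tendsto_atTop_add_const_right _ _ tendsto_natCast_atTop_atTop)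
      have := norm_sub_le (c + (k : ℂ)) c
      simp at this
      linarith
    simpa using (Filter.tendsto_inv₀_cobounded.comp h1).norm
  obtain ⟨B, hB⟩ := ht.bddAbove_range
  have hB' : ∀ k : ℕ, ‖(c + k)⁻¹‖ ≤ B := fun k => hB ⟨k, rfl⟩
  have hB0 : 0 ≤ B := (norm_nonneg _).trans (hB' 0)
  have hD : 0 ≤ 1 + ‖b - c‖ * B := by positivity
  refine ⟨1 + ‖b - c‖ * B, hD, fun k => ?_⟩
  induction k with
  | zero => simp [poch_zero']
  | succ k ih =>
    rw [poch_succ', poch_succ', mul_div_mul_comm, norm_mul, pow_succ]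
    refine mul_le_mul ih ?_ (norm_nonneg _) (by positivity)
    have : (b + k) / (c + k) = 1 + (b - c) * (c + k)⁻¹ := by
      have := hc k
      field_simp
      ring
    rw [this]
    refine (norm_add_le _ _).trans ?_
    rw [norm_mul, norm_one]
    have := hB' k
    gcongr

lemma hasSum_antidiagonal {f : ℕ × ℕ → ℂ} {s : ℂ} (h : HasSum f s) :
    HasSum (fun n => ∑ p ∈ antidiagonal n, f p) s := by
  have h' := (Finset.HasAntidiagonal.sigmaAntidiagonalEquivProd (A := ℕ)).hasSum_iff.2 h
  refine h'.sigma fun n => ?_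
  have := hasSum_fintype (fun c : antidiagonal n => f c)
  rw [Finset.sum_coe_sort (antidiagonal n) f] at this
  exact this

lemma fact_three_half (k : ℕ) : ((2 * k + 1).factorial : ℂ) = 4 ^ k * k.factorial * poch (3 / 2) k := by
  induction k with
  | zero => simp [poch_zero']
  | succ k ih =>
    rw [show 2 * (k + 1) + 1 = 2 * k + 1 + 1 + 1 by ring, Nat.factorial_succ, Nat.factorial_succ,
      Nat.factorial_succ k, poch_succ']
    push_cast
    rw [ih]; ring

lemma poch_half (k : ℕ) : poch (3 / 2) k = (2 * k + 1) * poch (1 / 2) k := by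
  induction k with
  | zero => simp [poch_zero']
  | succ k ih => rw [poch_succ', poch_succ', ih]; push_cast; ring

/-- double-series term -/
noncomputable def Fterm (x c : ℂ) (p : ℕ × ℕ) : ℂ :=
  x * (-1) ^ p.2 * (x ^ 2 / 4) ^ (p.1 + p.2) * x ^ (2 * p.1) *
    (poch (3 / 2) (p.1 + p.2) / poch c (p.1 + p.2)) /
      ((p.2.factorial : ℂ) * ((2 * p.1 + 1).factorial : ℂ))

lemma Fterm_summable (x : ℂ) {c : ℂ} (hc : ∀ n : ℕ, c + n ≠ 0) : Summable (Fterm x c) := by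
  obtain ⟨D, hD, hb⟩ := poch_bound (3 / 2) hc
  set u : ℝ := D * ‖x ^ 2 / 4‖ with hu
  have hu0 : 0 ≤ u := by positivity
  have s1 := Real.summable_pow_div_factorial u
  have s2 := Real.summable_pow_div_factorial (u * ‖x‖ ^ 2)
  have s3 := (s2.mul_of_nonneg s1 (fun _ => by positivity) (fun _ => by positivity)).mul_left ‖x‖
  refine Summable.of_norm_bounded s3 fun p => ?_
  obtain ⟨m, j⟩ := p
  simp only [Fterm, norm_mul, norm_div, norm_pow, norm_neg, norm_one, one_pow, Complex.norm_natCast]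
  have hb' := hb (m + j)
  rw [norm_div] at hb'
  have hf : ((m.factorial : ℕ) : ℝ) ≤ ((2 * m + 1).factorial : ℝ) := by
    exact_mod_cast Nat.factorial_le (by omega)
  have hm : (0 : ℝ) < m.factorial := by exact_mod_cast m.factorial_pos
  have hj : (0 : ℝ) < j.factorial := by exact_mod_cast j.factorial_pos
  calc _ ≤ ‖x‖ * 1 * (‖x‖ ^ 2 / ‖(4 : ℂ)‖) ^ (m + j) * ‖x‖ ^ (2 * m) * D ^ (m + j) /
        ((j.factorial : ℝ) * (m.factorial : ℝ)) := by gcongr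
    _ = _ := by
      rw [hu, norm_div, norm_pow]
      generalize ‖x‖ ^ 2 / ‖(4 : ℂ)‖ = v
      rw [pow_mul ‖x‖]
      generalize ‖x‖ ^ 2 = w
      simp only [mul_pow, pow_add]
      field_simp

lemma lhs_term (x : ℝ) {c : ℂ} (hc : ∀ n : ℕ, c + n ≠ 0) (k : ℕ) :
    (((x / 4) ^ (2 * k) * physHermite (2 * k + 1) (x / 2) : ℝ) : ℂ) /
        (poch c k * (Nat.factorial k : ℂ)) = ∑ p ∈ antidiagonal k, Fterm x c p := by
  rw [hermite_odd_explicit]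
  push_cast
  rw [mul_sum, sum_div]
  refine sum_congr rfl fun p hp => ?_
  obtain ⟨m, j⟩ := p
  obtain rfl := mem_antidiagonal.1 hp
  have h1 := poch_ne hc (m + j)
  have h2 : ((m + j).factorial : ℂ) ≠ 0 := by exact_mod_cast Nat.factorial_ne_zero _
  have h3 : ((j).factorial : ℂ) ≠ 0 := by exact_mod_cast Nat.factorial_ne_zero _
  have h4 : ((2 * m + 1).factorial : ℂ) ≠ 0 := by exact_mod_cast Nat.factorial_ne_zero _
  simp only [Fterm]
  rw [fact_three_half (m + j)]
  rw [show (2 * ((x : ℂ) / 2)) = x by ring, pow_mul ((x : ℂ) / 4),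
    show ((x : ℂ) / 4) ^ 2 = (x ^ 2 / 4) / 4 by ring, div_pow _ (4 : ℂ) (m + j), pow_succ _ (2 * m)]
  field_simp

/-- extension by zero to odd first index -/
noncomputable def Gterm (x c : ℂ) (p : ℕ × ℕ) : ℂ :=
  if Even p.1 then Fterm x c (p.1 / 2, p.2) else 0

lemma Gterm_hasSum {x c s : ℂ} (h : HasSum (Fterm x c) s) : HasSum (Gterm x c) s := by
  have hi : Function.Injective (fun p : ℕ × ℕ => (2 * p.1, p.2)) := by
    rintro ⟨a, b⟩ ⟨a', b'⟩ h
    simp at h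
    simp [h]
  refine (hi.hasSum_iff ?_).1 ?_
  · rintro ⟨i, j⟩ hij
    rw [Gterm, if_neg]
    rintro ⟨r, hr⟩
    exact hij ⟨(r, j), by simp at hr ⊢; omega⟩
  · convert h using 1
    funext p
    simp [Gterm]

open Polynomial in
lemma fiber (x : ℂ) {c : ℂ} (hc : ∀ n : ℕ, c + n ≠ 0) (n : ℕ) :
    ∑ p ∈ antidiagonal n, Gterm x c p =
      x * ((x ^ 2 / 4) ^ n / n.factorial * Efun c ((1 + X) * (1 - (1 + X) ^ 2) ^ n)) := by
  have hn : (n.factorial : ℂ) ≠ 0 := by exact_mod_cast Nat.factorial_ne_zero _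
  have e1 : ((1 + X) * (1 - (1 + X) ^ 2) ^ n : ℂ[X]) = ∑ i ∈ range (2 * (n + 1)),
      C ((-1) ^ n * 2 ^ i * (n.choose i : ℂ)) * ((1 + X) * X ^ (2 * n - i)) := by
    have : (1 - (1 + X) ^ 2 : ℂ[X]) = C (-1) * X * (C 2 + X) := by
      simp only [map_neg, map_one, map_ofNat]; ring
    rw [this, mul_pow, add_pow, mul_sum, mul_sum]
    refine (sum_subset_zero_on_sdiff (range_subset_range.2 (by omega)) ?_ ?_)
    · intro i hi
      simp only [Finset.mem_sdiff, Finset.mem_range] at hi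
      rw [Nat.choose_eq_zero_of_lt (by omega)]; simp
    · intro i hi
      have : i ≤ n := by have := Finset.mem_range.1 hi; omega
      rw [show 2 * n - i = n + (n - i) by omega, pow_add]
      simp only [map_mul, map_pow, map_natCast]
      ring
  rw [e1, map_sum, Nat.sum_antidiagonal_eq_sum_range_succ_mk]
  have e2 : ∑ i ∈ range n.succ, Gterm x c (i, n - i) =
      ∑ i ∈ range (2 * (n + 1)), if i ≤ n then Gterm x c (i, n - i) else 0 := by
    refine (sum_subset_zero_on_sdiff (range_subset_range.2 (by omega)) ?_ ?_)
    · intro i hi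
      simp only [Finset.mem_sdiff, Finset.mem_range] at hi
      rw [if_neg (by omega)]
    · intro i hi
      rw [if_pos (by have := Finset.mem_range.1 hi; omega)]
  rw [e2, sum_pairs, sum_pairs, mul_sum, mul_sum]
  refine sum_congr rfl fun m hm => ?_
  have hm' := Finset.mem_range.1 hm
  have g1 : (if 2 * m + 1 ≤ n then Gterm x c (2 * m + 1, n - (2 * m + 1)) else 0) = 0 := by
    simp [Gterm]
  rw [g1, add_zero, Efun_C_mul, Efun_C_mul]
  by_cases h : 2 * m ≤ n
  · rw [if_pos h]
    obtain ⟨j, rfl⟩ := Nat.exists_eq_add_of_le h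
    have q1 : Efun c ((1 + X) * X ^ (2 * (2 * m + j) - 2 * m)) =
        poch (1 / 2) (m + j) / poch c (m + j) := by
      rw [show 2 * (2 * m + j) - 2 * m = 2 * (m + j) by omega, add_mul, one_mul, ← pow_succ',
        map_add, Efun_X_pow, Efun_X_pow, qseq_even, qseq_odd, add_zero]
    have q2 : ((2 * m + j).choose (2 * m + 1) : ℂ) * Efun c ((1 + X) * X ^ (2 * (2 * m + j) - (2 * m + 1))) =
        ((2 * m + j).choose (2 * m + 1) : ℂ) * (poch (1 / 2) (m + j) / poch c (m + j)) := by
      cases j with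
      | zero => simp
      | succ j =>
        rw [show 2 * (2 * m + (j + 1)) - (2 * m + 1) = 2 * (m + j) + 1 by omega, add_mul, one_mul, ← pow_succ',
          map_add, Efun_X_pow, Efun_X_pow, qseq_odd, zero_add,
          show 2 * (m + j) + 1 + 1 = 2 * (m + (j + 1)) by ring, qseq_even]
    have c1 : ((2 * m + j).choose (2 * m + 1) : ℂ) * (2 * m + 1) = (2 * m + j).choose (2 * m) * j := by
      have := Nat.choose_succ_right_eq (2 * m + j) (2 * m)
      rw [Nat.add_sub_cancel_left] at this
      exact_mod_cast this
    have c2 : ((2 * m + j).choose (2 * m) : ℂ) = (2 * m + j).factorial / ((2 * m).factorial * j.factorial) := by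
      rw [Nat.cast_choose ℂ (by omega), Nat.add_sub_cancel_left]
    have hm1 : (2 * (m : ℂ) + 1) ≠ 0 := by exact_mod_cast Nat.succ_ne_zero (2 * m)
    have c3 : ((2 * m + j).choose (2 * m + 1) : ℂ) =
        (2 * m + j).factorial / ((2 * m).factorial * j.factorial) * j / (2 * m + 1) := by
      rw [eq_div_iff hm1, c1, c2]
    rw [mul_assoc ((-1) ^ _ * 2 ^ (2 * m + 1)) _ (Efun c _), q2, q1, c3, c2]
    have h3 : ((j).factorial : ℂ) ≠ 0 := by exact_mod_cast Nat.factorial_ne_zero _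
    have h4 : ((2 * m).factorial : ℂ) ≠ 0 := by exact_mod_cast Nat.factorial_ne_zero _
    have h5 := poch_ne hc (m + j)
    simp only [Gterm, even_two, Even.mul_right, if_true, Nat.add_sub_cancel_left, Fterm]
    rw [show 2 * m / 2 = m by omega, poch_half, Nat.factorial_succ (2 * m)]
    have hx : (x ^ 2 / 4) ^ (2 * m + j) * 4 ^ m = (x ^ 2 / 4) ^ (m + j) * x ^ (2 * m) := by
      rw [pow_mul x, show (2 * m + j) = (m + j) + m by ring, pow_add, mul_assoc, ← mul_pow]
      congr 2; ring
    have hs : ((-1 : ℂ)) ^ (2 * m + j) = (-1) ^ j := by rw [pow_add, pow_mul]; simp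
    rw [hs, mul_assoc (x * (-1) ^ j), ← hx, pow_succ (2 : ℂ), pow_mul (2 : ℂ)]
    push_cast
    norm_num
    field_simp
    ring
  · rw [if_neg h, Nat.choose_eq_zero_of_lt (by omega : n < 2 * m),
      Nat.choose_eq_zero_of_lt (by omega : n < 2 * m + 1)]
    simp

open Polynomial in
lemma rhs_fiber (y c : ℂ) (n : ℕ) :
    ∑ p ∈ antidiagonal n, y ^ p.1 / (p.1.factorial : ℂ) *
        (Efun c ((1 + X) ^ (2 * p.2 + 1)) * (-y) ^ p.2 / (p.2.factorial : ℂ)) =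
      y ^ n / n.factorial * Efun c ((1 + X) * (1 - (1 + X) ^ 2) ^ n) := by
  have hn : (n.factorial : ℂ) ≠ 0 := by exact_mod_cast Nat.factorial_ne_zero _
  have e1 : ((1 + X) * (1 - (1 + X) ^ 2) ^ n : ℂ[X]) = ∑ p ∈ antidiagonal n,
      C ((n.choose p.1 : ℂ) * (-1) ^ p.2) * (1 + X) ^ (2 * p.2 + 1) := by
    rw [sub_eq_add_neg, Commute.add_pow' (Commute.all _ _), mul_sum]
    refine sum_congr rfl fun p _ => ?_
    rw [neg_pow, ← pow_mul, nsmul_eq_mul]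
    simp
    ring
  rw [e1, map_sum, mul_sum]
  refine sum_congr rfl fun p hp => ?_
  obtain ⟨i, j⟩ := p
  obtain rfl := mem_antidiagonal.1 hp
  rw [Efun_C_mul]
  have h3 : ((j).factorial : ℂ) ≠ 0 := by exact_mod_cast Nat.factorial_ne_zero _
  have h4 : ((i).factorial : ℂ) ≠ 0 := by exact_mod_cast Nat.factorial_ne_zero _
  simp only
  rw [Nat.cast_choose ℂ (by omega : i ≤ i + j), Nat.add_sub_cancel_left, neg_pow y, pow_add y]
  generalize Efun c ((1 + X) ^ (2 * j + 1)) = e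
  simp only at hn
  field_simp

end Aux

/-- Odd Hermite series in closed ₂F₂-form:
`Σ_k (x/4)^{2k} H_{2k+1}(x/2)/((a+3/2)_k k!)
  = x e^{x²/4} ₂F₂(a/2+1, a/2+3/2; a+3/2, a+2; -x²)`. -/
theorem hermite_odd_series
    (x : ℝ) (a : ℂ)
    (ha3 : ∀ n : ℕ, a + 3 / 2 ≠ -(n : ℂ))
    (ha2 : ∀ n : ℕ, a + 2 ≠ -(n : ℂ)) :
    ∑' k : ℕ, (((x / 4) ^ (2 * k) * physHermite (2 * k + 1) (x / 2) : ℝ) : ℂ) /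
        (poch (a + 3 / 2) k * (Nat.factorial k : ℂ))
      = (x : ℂ) * Complex.exp ((x : ℂ) ^ 2 / 4) *
          ∑' k : ℕ, poch (a / 2 + 1) k * poch (a / 2 + 3 / 2) k * (-(x : ℂ) ^ 2) ^ k /
            (poch (a + 3 / 2) k * poch (a + 2) k * (Nat.factorial k : ℂ)) := by

  have h3 : ∀ n : ℕ, a + 3 / 2 + n ≠ 0 := fun n h => ha3 n (eq_neg_of_add_eq_zero_left h)
  have h2 : ∀ n : ℕ, a + 2 + n ≠ 0 := fun n h => ha2 n (eq_neg_of_add_eq_zero_left h)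
  set c := a + 3 / 2 with hc
  have hF := (Fterm_summable (x : ℂ) h3).hasSum
  rw [tsum_congr (lhs_term x h3), (hasSum_antidiagonal hF).tsum_eq,
    ← (hasSum_antidiagonal (Gterm_hasSum hF)).tsum_eq, tsum_congr (fiber (x : ℂ) h3), tsum_mul_left,
    mul_assoc]
  congr 1
  have hE : ∀ k : ℕ, poch (a / 2 + 1) k * poch (a / 2 + 3 / 2) k * (-(x : ℂ) ^ 2) ^ k /
            (poch c k * poch (a + 2) k * (Nat.factorial k : ℂ)) =
      Efun c ((1 + Polynomial.X) ^ (2 * k + 1)) * (-((x : ℂ) ^ 2 / 4)) ^ k / (k.factorial : ℂ) := by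
    intro k
    rw [Efun_odd h3 h2 k, show -((x : ℂ) ^ 2 / 4) = (-(x : ℂ) ^ 2) / 4 by ring, div_pow]
    have := poch_ne h3 k
    have := poch_ne h2 k
    have h3 : ((k).factorial : ℂ) ≠ 0 := by exact_mod_cast Nat.factorial_ne_zero _
    rw [← hc]
    generalize poch c k = P1 at *
    generalize poch (a + 2) k = P2 at *
    field_simp
  have hexp : Complex.exp ((x : ℂ) ^ 2 / 4) = ∑' k : ℕ, ((x : ℂ) ^ 2 / 4) ^ k / (k.factorial : ℂ) := by
    rw [Complex.exp_eq_exp_ℂ, (NormedSpace.expSeries_div_hasSum_exp ((x : ℂ) ^ 2 / 4)).tsum_eq]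
  have s1 : Summable fun k : ℕ => ‖((x : ℂ) ^ 2 / 4) ^ k / (k.factorial : ℂ)‖ := by
    refine (Real.summable_pow_div_factorial ‖(x : ℂ) ^ 2 / 4‖).congr fun k => ?_
    rw [← norm_pow, ← Complex.norm_natCast, ← norm_div]
  have s2 : Summable fun k : ℕ => ‖poch (a / 2 + 1) k * poch (a / 2 + 3 / 2) k * (-(x : ℂ) ^ 2) ^ k /
            (poch c k * poch (a + 2) k * (Nat.factorial k : ℂ))‖ := by
    obtain ⟨D, hD, hb⟩ := poch_bound (a / 2 + 1) h3
    obtain ⟨D', hD', hb'⟩ := poch_bound (a / 2 + 3 / 2) h2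
    refine Summable.of_nonneg_of_le (fun _ => norm_nonneg _) (fun k => ?_)
      (Real.summable_pow_div_factorial (D * D' * ‖(-(x : ℂ) ^ 2)‖))
    have e : ‖poch (a / 2 + 1) k * poch (a / 2 + 3 / 2) k * (-(x : ℂ) ^ 2) ^ k /
            (poch c k * poch (a + 2) k * (Nat.factorial k : ℂ))‖ =
        ‖poch (a / 2 + 1) k / poch c k‖ * ‖poch (a / 2 + 3 / 2) k / poch (a + 2) k‖ *
          (‖-(x : ℂ) ^ 2‖ ^ k / (k.factorial : ℝ)) := by
      rw [← norm_pow, ← Complex.norm_natCast, ← norm_div, ← norm_mul, ← norm_mul,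
        div_mul_div_comm, div_mul_div_comm]
    rw [e, mul_pow, mul_pow, mul_div_assoc]
    exact mul_le_mul_of_nonneg_right
      (mul_le_mul (hb k) (hb' k) (norm_nonneg _) (pow_nonneg hD k)) (by positivity)
  rw [hexp, tsum_mul_tsum_eq_tsum_sum_antidiagonal_of_summable_norm s1 s2]
  refine tsum_congr fun n => ?_
  rw [← rhs_fiber]
  refine Finset.sum_congr rfl fun p _ => ?_
  rw [hE]
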